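/- arXiv:2001.06994 — 2 statements merged into one kernel-verified Lean document; each statement's English description precedes it below -/
import Mathlib

section
/- Let p be a prime and let B ⊆ GF(p) \ {0} with |B| = n ≥ 2 and n² < p. Then the set {(x − y)/(z − w) − (z·w)⁻¹ : w, x, y, z ∈ B, z ≠ w} ⊆ GF(p) has at least n² − n elements. -/
/-!
Since `(z w)⁻¹ = (w⁻¹ - z⁻¹) / (z - w)`, the elements of the set are exactly the slopes
`((x + z⁻¹) - (y + w⁻¹)) / (z - w)` determined by the `n²` points `(z, x + z⁻¹)`, `x, z ∈ B`, and
the bound comes from the Rédei polynomial method for direction sets.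

Let `H(X, Y) = ∏ (X - (z - (x + z⁻¹) Y))`, monic in `X` of degree `N = n²` and of total degree `N`,
and divide: `X ^ p = H q + R` with `deg_X R < N` and total degree of `R` at most `p`
(`exists_division_pow`). Call `y` *bad* if the roots `z - (x + z⁻¹) y` of `H(X, y)` are not
distinct; a nonzero bad `y` is the inverse of a slope. If `y` is not bad then `H(X, y)` divides
`X ^ p - X`, whence `R(X, y) = X`. Hence for `j ≥ 2` the coefficient of `X ^ j` in `R`, a polynomial
in `Y` of degree at most `p - j`, vanishes at every good `y`, and it is zero once `j` exceeds the
number of bad values (`coeff_eq_zero_of_bad_card_lt`).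

At `Y = 0` we have `H(X, 0) = ∏ (X - z) ^ n`, which divides `X ^ p - g` with `g = R(X, 0)`.
Differentiating, `∏ (X - z) ^ (n - 1)` divides `g'`, and `g' ≠ 0` because the injective Frobenius map
takes at least two values on `B`. So `n (n - 1) ≤ deg g - 1`, and there are at least `n² - n + 1` bad
values, at most one of which is `0`.
-/

open Polynomial

/-- A polynomial in `K[Y][X]` has total degree at most `d`: the coefficient of `X ^ j Y ^ i`
vanishes whenever `i + j > d`. -/
def TotalDegLE {K : Type*} [Field K] (d : ℕ) (P : K[X][X]) : Prop :=
  ∀ j i, d < i + j → (P.coeff j).coeff i = 0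

lemma TotalDegLE.mul {K : Type*} [Field K] {a b : ℕ} {P Q : K[X][X]}
    (hP : TotalDegLE a P) (hQ : TotalDegLE b Q) : TotalDegLE (a + b) (P * Q) := by
  intro j i h
  rw [coeff_mul, finsetSum_coeff]
  refine Finset.sum_eq_zero fun s hs => ?_
  rw [coeff_mul]
  refine Finset.sum_eq_zero fun t ht => ?_
  rw [Finset.HasAntidiagonal.mem_antidiagonal] at hs ht
  by_cases h1 : a < t.1 + s.1
  · rw [hP _ _ h1, zero_mul]
  · rw [hQ s.2 t.2 (by omega), mul_zero]

lemma totalDegLE_linear {K : Type*} [Field K] (u v : K) :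
    TotalDegLE 1 (X - C (C v - C u * X) : K[X][X]) := by
  intro j i h
  rw [coeff_sub, coeff_sub, coeff_X, coeff_C]
  rcases j with _ | _ | j
  · rcases i with _ | _ | i
    · omega
    · omega
    · simp
  · rcases i with _ | i
    · omega
    · simp [coeff_one]
  · simp

lemma totalDegLE_prod {K ι : Type*} [Field K] (s : Finset ι) (u v : ι → K) :
    TotalDegLE s.card (∏ k ∈ s, (X - C (C (v k) - C (u k) * X)) : K[X][X]) := by
  classical
  induction s using Finset.induction_on with
  | empty =>
    intro j i h
    rcases j with _ | j
    · rcases i with _ | i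
      · simp at h
      · simp [coeff_one]
    · simp [coeff_one]
  | insert a s ha ih =>
    rw [Finset.prod_insert ha, Finset.card_insert_of_notMem ha, add_comm]
    exact (totalDegLE_linear _ _).mul ih

/-- Dividing `X ^ d` by a polynomial `H` monic in `X` whose total degree equals its degree in `X`
leaves a remainder of total degree at most `d`. -/
lemma exists_division_pow {K : Type*} [Field K] {N : ℕ} (hN : 1 ≤ N) {H : K[X][X]}
    (hH : TotalDegLE N H) (hmonic : H.Monic) (hdeg : H.natDegree = N) (d : ℕ) :
    ∃ q R : K[X][X], X ^ d = H * q + R ∧ (∀ j, N ≤ j → R.coeff j = 0) ∧ TotalDegLE d R := by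
  induction d with
  | zero =>
    refine ⟨0, 1, by simp, fun j hj => ?_, fun j i h => ?_⟩
    · rw [coeff_one, if_neg (by omega)]
    · rcases j with _ | j
      · rw [coeff_one, if_pos rfl, coeff_one, if_neg (by omega)]
      · simp [coeff_one]
  | succ d ih =>
    obtain ⟨q, R, hq, hR, hW⟩ := ih
    -- Multiply by `X` and cancel the term of degree `N` in `X` with a multiple of `H`.
    refine ⟨X * q + C (R.coeff (N - 1)), X * R - C (R.coeff (N - 1)) * H, ?_, ?_, ?_⟩
    · rw [pow_succ, hq]; ring
    · intro j hj
      obtain ⟨j, rfl⟩ : ∃ k, j = k + 1 := ⟨j - 1, by omega⟩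
      rw [coeff_sub, coeff_X_mul, coeff_C_mul]
      rcases hj.eq_or_lt with h | h
      · have h1 : H.coeff (j + 1) = 1 := by rw [← h, ← hdeg]; exact hmonic
        rw [h1, h]; simp
      · have h1 : H.coeff (j + 1) = 0 := coeff_eq_zero_of_natDegree_lt (by omega)
        rw [hR j (by omega), h1]; simp
    · intro j i h
      have h1 : ((X * R).coeff j).coeff i = 0 := by
        rcases j with _ | j
        · simp
        · rw [coeff_X_mul]; exact hW _ _ (by omega)
      rw [coeff_sub, coeff_sub, h1, zero_sub, neg_eq_zero, coeff_C_mul, coeff_mul]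
      refine Finset.sum_eq_zero fun t ht => ?_
      rw [Finset.HasAntidiagonal.mem_antidiagonal] at ht
      by_cases h2 : d < t.1 + (N - 1)
      · rw [hW _ _ h2, zero_mul]
      · rw [hH j t.2 (by omega), mul_zero]

/-- Let `R` have total degree at most `p` and satisfy `R(X, y) = X` for all `y` outside `D`. For
`2 ≤ j < p` with `|D| < j`, the coefficient of `X ^ j` is a polynomial in `Y` of degree at most
`p - j` with `p - |D| > p - j` zeros, so it vanishes. -/
lemma coeff_eq_zero_of_bad_card_lt {p : ℕ} [Fact p.Prime] {R : (ZMod p)[X][X]}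
    (hW : TotalDegLE p R) (D : Finset (ZMod p))
    (hD : ∀ y, y ∉ D → R.map (evalRingHom y) = X) {j : ℕ} (hj : 2 ≤ j) (hjp : j < p)
    (hjD : D.card < j) : R.coeff j = 0 := by
  refine eq_zero_of_natDegree_lt_card_of_eval_eq_zero' _ Dᶜ (fun y hy => ?_) ?_
  · have h := congrArg (fun P => coeff P j) (hD y (Finset.mem_compl.1 hy))
    simpa [coeff_X, show (1 : ℕ) ≠ j by omega] using h
  · rw [Finset.card_compl, ZMod.card]
    have : (R.coeff j).natDegree ≤ p - j :=
      natDegree_le_iff_coeff_eq_zero.2 fun i hi => hW j i (by omega)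
    omega

/-- If `g` has degree less than `p` and `X ^ p - g` vanishes to order `n` at each of the `n ≥ 2`
points of `B`, then `deg g > n (n - 1)`. -/
lemma lt_natDegree_of_pow_dvd {p n : ℕ} [Fact p.Prime] {B : Finset (ZMod p)}
    (hcard : B.card = n) (hn : 2 ≤ n) {g : (ZMod p)[X]} (hg : g.natDegree < p)
    (hdvd : ∀ z ∈ B, (X - C z) ^ n ∣ X ^ p - g) : n * (n - 1) < g.natDegree := by
  have hder : derivative (X ^ p - g) = -derivative g := by simp [derivative_X_pow]
  have hg' : derivative g ≠ 0 := by
    intro h0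
    -- As `deg g < p`, a vanishing derivative makes `g` constant.
    have hconst : g.natDegree = 0 := by
      by_contra hne
      obtain ⟨k, hk⟩ := Nat.exists_eq_succ_of_ne_zero hne
      have h1 := congrArg (fun P => coeff P k) h0
      rw [coeff_derivative, coeff_zero] at h1
      rcases mul_eq_zero.1 h1 with h2 | h2
      · rw [← Nat.succ_eq_add_one, ← hk] at h2
        have : g = 0 := leadingCoeff_eq_zero.1 h2
        simp [this] at hne
      · have h3 : ((k + 1 : ℕ) : ZMod p) = 0 := by exact_mod_cast h2
        rw [ZMod.natCast_eq_zero_iff] at h3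
        have := Nat.le_of_dvd (by omega) h3
        omega
    rw [natDegree_eq_zero] at hconst
    obtain ⟨c, rfl⟩ := hconst
    have hz : ∀ z ∈ B, z = c := by
      intro z hz
      have h1 := dvd_iff_isRoot.1 ((dvd_pow_self (X - C z) (by omega)).trans (hdvd z hz))
      simpa [sub_eq_zero, ZMod.pow_card] using h1
    have := Finset.card_le_one.2 fun a ha b hb => (hz a ha).trans (hz b hb).symm
    omega
  have hprod : ∏ z ∈ B, (X - C z) ^ (n - 1) ∣ derivative g := by
    refine Finset.prod_dvd_of_coprime (fun a _ b _ hab => ?_) fun z hz => ?_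
    · exact (pairwise_coprime_X_sub_C Function.injective_id hab).pow
    · have := pow_sub_one_dvd_derivative_of_pow_dvd (hdvd z hz)
      rwa [hder, dvd_neg] at this
  have h1 := natDegree_le_of_dvd hprod hg'
  rw [natDegree_prod_of_monic _ _ fun z _ => (monic_X_sub_C z).pow _] at h1
  simp only [natDegree_pow, natDegree_X_sub_C, mul_one, Finset.sum_const, hcard,
    smul_eq_mul] at h1
  have h2 : g.natDegree ≠ 0 := by
    intro h
    obtain ⟨c, rfl⟩ := natDegree_eq_zero.1 h
    simp at hg'
  exact h1.trans_lt (natDegree_derivative_lt h2)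

/-- The direction bound for the points `(z, u (z, x))` with `z, x ∈ B`, `u` arbitrary: `D` contains
every `y` at which two points share a value of `z - u (z, x) y`. It is large because at `y = 0` every
value `z ∈ B` is taken `n` times. -/
lemma lt_card_of_injOn_compl {p n : ℕ} [Fact p.Prime] {B : Finset (ZMod p)}
    (hcard : B.card = n) (hn : 2 ≤ n) (hn2 : n ^ 2 < p) (u : ZMod p × ZMod p → ZMod p)
    (D : Finset (ZMod p))
    (hD : ∀ y, y ∉ D → Set.InjOn (fun k : ZMod p × ZMod p => k.1 - u k * y) (B ×ˢ B : Finset _)) :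
    n * (n - 1) < D.card := by
  set H : (ZMod p)[X][X] := ∏ k ∈ B ×ˢ B, (X - C (C k.1 - C (u k) * X)) with hHdef
  have hc : (B ×ˢ B).card = n ^ 2 := by rw [Finset.card_product, hcard, sq]
  have hN : 4 ≤ n ^ 2 := by nlinarith
  have hH : TotalDegLE (n ^ 2) H := hc ▸ totalDegLE_prod _ _ _
  have hmonic : H.Monic := monic_prod_of_monic _ _ fun _ _ => monic_X_sub_C _
  have hdeg : H.natDegree = n ^ 2 := by
    rw [hHdef, natDegree_prod_of_monic _ _ fun _ _ => monic_X_sub_C _]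
    simp only [natDegree_X_sub_C, Finset.sum_const, hc, smul_eq_mul, mul_one]
  obtain ⟨q, R, hq, hR, hW⟩ := exists_division_pow (by omega) hH hmonic hdeg p
  have hmapH : ∀ y, H.map (evalRingHom y) = ∏ k ∈ B ×ˢ B, (X - C (k.1 - u k * y)) := by
    intro y
    rw [hHdef, Polynomial.map_prod]
    refine Finset.prod_congr rfl fun k _ => ?_
    rw [Polynomial.map_sub, map_X, map_C]
    simp
  have hmap : ∀ y, (X : (ZMod p)[X]) ^ p
      = H.map (evalRingHom y) * q.map (evalRingHom y) + R.map (evalRingHom y) := by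
    intro y
    rw [← Polynomial.map_mul, ← Polynomial.map_add, ← hq, Polynomial.map_pow, map_X]
  have hgood : ∀ y, y ∉ D → R.map (evalRingHom y) = X := by
    intro y hy
    have h1 : H.map (evalRingHom y) ∣ X ^ p - X := by
      rw [hmapH]
      refine Finset.prod_dvd_of_coprime (fun a ha b hb hab => ?_) fun k _ => ?_
      · exact pairwise_coprime_X_sub_C Function.injective_id
          fun h => hab (hD y hy ha hb h)
      · rw [dvd_iff_isRoot]; simp [ZMod.pow_card]
    have h2 : H.map (evalRingHom y) ∣ R.map (evalRingHom y) - X := by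
      have : R.map (evalRingHom y) - X
          = (X ^ p - X) - H.map (evalRingHom y) * q.map (evalRingHom y) := by
        rw [hmap y]; ring
      rw [this]
      exact dvd_sub h1 (dvd_mul_right _ _)
    refine sub_eq_zero.1 (eq_zero_of_dvd_of_natDegree_lt h2 ?_)
    rw [hmonic.natDegree_map, hdeg]
    refine lt_of_le_of_lt (natDegree_le_iff_coeff_eq_zero.2 fun j hj => ?_)
      (show n ^ 2 - 1 < n ^ 2 by omega)
    rw [coeff_sub, coeff_map, hR j (by omega), coeff_X, if_neg (by omega)]
    simp
  have hg : (R.map (evalRingHom 0)).natDegree ≤ max 1 D.card := by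
    refine natDegree_le_iff_coeff_eq_zero.2 fun j hj => ?_
    rw [max_lt_iff] at hj
    rw [coeff_map]
    rcases lt_or_ge j (n ^ 2) with h | h
    · rw [coeff_eq_zero_of_bad_card_lt hW D hgood hj.1 (by omega) hj.2, map_zero]
    · rw [hR j h, map_zero]
  have hgp : (R.map (evalRingHom 0)).natDegree < p := by
    refine lt_of_le_of_lt (natDegree_le_iff_coeff_eq_zero.2 fun j hj => ?_) hn2
    rw [coeff_map, hR j hj.le, map_zero]
  have hmain := lt_natDegree_of_pow_dvd hcard hn hgp fun z hz => by
    rw [hmap 0, add_sub_cancel_right]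
    refine Dvd.dvd.mul_right ?_ _
    rw [hmapH, Finset.prod_product]
    refine Dvd.dvd.trans ?_ (Finset.dvd_prod_of_mem _ hz)
    simp [hcard]
  have : 2 ≤ n * (n - 1) := by
    have : 1 ≤ n - 1 := by omega
    nlinarith
  omega

/-- For `B ⊆ GF(p) \ {0}` with `|B| = n ≥ 2` and `n² < p`, the set
`{(x-y)/(z-w) - (zw)⁻¹ : w,x,y,z ∈ B, z ≠ w}` has at least `n² - n` elements. -/
theorem shifted_quotient_set_lower_bound' (p n : ℕ) (hp : p.Prime)
    (B : Finset (ZMod p)) (h0 : (0 : ZMod p) ∉ B)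
    (hcard : B.card = n) (hn : 2 ≤ n) (hn2 : n ^ 2 < p) :
    n ^ 2 - n ≤
      {t : ZMod p | ∃ w ∈ B, ∃ x ∈ B, ∃ y ∈ B, ∃ z ∈ B, z ≠ w ∧
        t = (x - y) * (z - w)⁻¹ - (z * w)⁻¹}.ncard := by
  classical
  have : Fact p.Prime := ⟨hp⟩
  set T := {t : ZMod p | ∃ w ∈ B, ∃ x ∈ B, ∃ y ∈ B, ∃ z ∈ B, z ≠ w ∧
        t = (x - y) * (z - w)⁻¹ - (z * w)⁻¹} with hT
  have hkey := lt_card_of_injOn_compl hcard hn hn2 (fun k => k.2 + k.1⁻¹)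
    (insert 0 (T.toFinset.image fun t => t⁻¹)) (by
      rintro y hy ⟨z, x⟩ hzx ⟨w, x'⟩ hwx heq
      simp only [Finset.mem_insert, not_or, Finset.mem_image, Set.mem_toFinset, not_exists,
        not_and] at hy
      obtain ⟨hy0, hy⟩ := hy
      simp only [Finset.coe_product, Set.mem_prod, Finset.mem_coe] at hzx hwx
      have hz0 : z ≠ 0 := fun h => h0 (h ▸ hzx.1)
      have hw0 : w ≠ 0 := fun h => h0 (h ▸ hwx.1)
      dsimp only at heq
      by_cases hzw : z = w
      · subst hzw
        have h1 : (x - x') * y = 0 := by linear_combination -heq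
        rw [mul_eq_zero, or_iff_left hy0, sub_eq_zero] at h1
        rw [h1]
      · refine absurd (inv_inv y) (hy y⁻¹ ⟨w, hwx.1, x, hzx.2, x', hwx.2, z, hzx.1, hzw, ?_⟩)
        have hzw' : z - w ≠ 0 := sub_ne_zero.2 hzw
        field_simp at heq ⊢
        linear_combination heq)
  have h1 := Finset.card_insert_le (0 : ZMod p) (T.toFinset.image fun t => t⁻¹)
  have h2 := Finset.card_image_le (s := T.toFinset) (f := fun t => t⁻¹)
  rw [Set.ncard_eq_toFinset_card']
  rw [Nat.mul_sub, mul_one, ← sq] at hkey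
  omega
end

section
/- Let p be a prime and A ⊆ GF(p) with |A| ≥ 2 and |A|² < p. Then there exists a nonzero x ∈ GF(p) such that x = (a − b)/(c − d) for some a, b, c, d ∈ A with a ≠ b and c ≠ d, and the number of quadruples (a, b, c, d) ∈ A⁴ with a ≠ b, c ≠ d and a − b = x·(c − d) is at most |A|² − |A|. -/
/-!
Write `n = |A|`, and let `Q` be the set of nonzero quotients `(a - b) / (c - d)`. The total number
of quadruples with `a ≠ b` and `c ≠ d` is `(n² - n)²`, and each represents exactly one element of
`Q`; so it is enough to know that `|Q| ≥ n² - n` (`card_sq_sub_card_le_card_quotients`) and to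
average over `Q`.

The bound on `|Q|` is a Rédei polynomial argument. Let `H(X, Y) = ∏_{a, b ∈ A} (X - (a - Y b))`, a
polynomial in `X` over `GF(p)[Y]` which is monic of degree `n²` and of total degree `n²`. Divide
with remainder: `X ^ p = H f + r`. The remainder has total degree at most `p`
(`exists_remainder`), so the coefficient of `X ^ j` in `r` has degree at most `p - j` in `Y`. If
`y ∉ Q ∪ {0}`, the roots `a - y b` of `H(X, y)` are distinct, hence `H(X, y)` divides `X ^ p - X`
and `r(X, y) = X`. So for `j > |Q ∪ {0}|` the coefficient of `X ^ j` has more zeros than its degree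
allows and vanishes identically. Specializing at `Y = 0`, where `H(X, 0) = P ^ n` with
`P = ∏_{a ∈ A} (X - a)`, gives `X ^ p = P ^ n f₀ + r₀` with `deg r₀ ≤ |Q| + 1`. Differentiating in
characteristic `p`, `P ^ (n - 1)` divides `r₀'`, which is nonzero, because otherwise `r₀` would be a
constant `c` and every `a ∈ A` would satisfy `a = a ^ p = c`. Comparing degrees,
`n (n - 1) ≤ deg r₀' ≤ |Q|`.
-/

open Polynomial in
/-- The polynomial `q` in two variables, seen as a polynomial in `X` with coefficients in `F[Y]`,
has total degree at most `m`. (The degree of `0` is `⊥`, so this says that the coefficients of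
`X ^ j` with `j > m` vanish.) -/
def TotalDegreeLE {F : Type*} [Field F] (m : ℕ) (q : F[X][X]) : Prop :=
  ∀ j : ℕ, (q.coeff j).degree + (j : WithBot ℕ) ≤ (m : WithBot ℕ)

namespace TotalDegreeLE

open Polynomial

variable {F : Type*} [Field F] {m k : ℕ} {q r : F[X][X]}

lemma sub (hq : TotalDegreeLE m q) (hr : TotalDegreeLE m r) : TotalDegreeLE m (q - r) := by
  intro j
  rw [coeff_sub]
  rcases le_total (q.coeff j).degree (r.coeff j).degree with h | h
  · exact (add_le_add_left ((degree_sub_le _ _).trans (max_le h le_rfl)) _).trans (hr j)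
  · exact (add_le_add_left ((degree_sub_le _ _).trans (max_le le_rfl h)) _).trans (hq j)

lemma mul (hq : TotalDegreeLE m q) (hr : TotalDegreeLE k r) :
    TotalDegreeLE (m + k) (q * r) := by
  intro j
  rw [coeff_mul]
  -- Stated for partial sums, with the number `j` fixed, so that induction on the index set applies.
  have key : ∀ s ⊆ Finset.HasAntidiagonal.antidiagonal j,
      (∑ x ∈ s, q.coeff x.1 * r.coeff x.2).degree + (j : WithBot ℕ) ≤ ((m + k : ℕ) : WithBot ℕ) := by
    intro s
    induction s using Finset.induction_on with
    | empty => intro _; simp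
    | insert x s hx ih =>
      intro hs
      rw [Finset.sum_insert hx]
      have h1 := ih ((Finset.subset_insert _ _).trans hs)
      have h2 : (q.coeff x.1 * r.coeff x.2).degree + (j : WithBot ℕ) ≤
          ((m + k : ℕ) : WithBot ℕ) := by
        have hj : x.1 + x.2 = j := Finset.HasAntidiagonal.mem_antidiagonal.1 (hs (Finset.mem_insert_self _ _))
        rw [degree_mul, ← hj]
        push_cast
        rw [add_add_add_comm]
        exact add_le_add (hq _) (hr _)
      rcases le_total (q.coeff x.1 * r.coeff x.2).degree
        (∑ x ∈ s, q.coeff x.1 * r.coeff x.2).degree with h | h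
      · exact (add_le_add_left ((degree_add_le _ _).trans (max_le h le_rfl)) _).trans h1
      · exact (add_le_add_left ((degree_add_le _ _).trans (max_le le_rfl h)) _).trans h2
  exact key _ subset_rfl

lemma one : TotalDegreeLE 0 (1 : F[X][X]) := by
  intro j
  rw [coeff_one]
  split_ifs with h
  · subst h; simp
  · simp

lemma X : TotalDegreeLE 1 (X : F[X][X]) := by
  intro j
  rw [coeff_X]
  split_ifs with h
  · subst h; simp
  · simp

lemma C {c : F[X]} (hc : c.degree ≤ (m : WithBot ℕ)) : TotalDegreeLE m (C c) := by
  intro j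
  rw [coeff_C]
  split_ifs with h
  · subst h; simpa using hc
  · simp

lemma prod {ι : Type*} (s : Finset ι) (g : ι → F[X][X]) (hg : ∀ i ∈ s, TotalDegreeLE 1 (g i)) :
    TotalDegreeLE s.card (∏ i ∈ s, g i) := by
  classical
  induction s using Finset.induction_on with
  | empty => simpa using one
  | insert x s hx ih =>
    rw [Finset.prod_insert hx, Finset.card_insert_of_notMem hx, add_comm]
    exact (hg _ (Finset.mem_insert_self _ _)).mul
      (ih fun i hi => hg i (Finset.mem_insert_of_mem hi))

end TotalDegreeLE

open Polynomial in
/-- Dividing `X ^ m` by a monic polynomial `H` whose total degree is its degree `k` in `X` leaves a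
remainder of total degree at most `m`. -/
lemma exists_remainder {F : Type*} [Field F] {H : F[X][X]} {k : ℕ} (hk : 1 ≤ k)
    (hmon : H.Monic) (hdeg : H.natDegree = k) (hH : TotalDegreeLE k H) (m : ℕ) :
    ∃ f r : F[X][X], X ^ m = H * f + r ∧ (∀ j, k ≤ j → r.coeff j = 0) ∧ TotalDegreeLE m r := by
  induction m with
  | zero =>
    refine ⟨0, 1, by simp, fun j hj => ?_, .one⟩
    rw [coeff_one, if_neg (by omega)]
  | succ m ih =>
    obtain ⟨f, r, h1, h2, h3⟩ := ih
    refine ⟨X * f + C (r.coeff (k - 1)), X * r - C (r.coeff (k - 1)) * H, ?_, ?_, ?_⟩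
    · rw [pow_succ, h1]; ring
    · intro j hj
      obtain ⟨i, rfl⟩ : ∃ i, j = i + 1 := ⟨j - 1, by omega⟩
      rw [coeff_sub, coeff_X_mul, coeff_C_mul]
      rcases hj.eq_or_lt with h | h
      · have : H.coeff (i + 1) = 1 := by rw [← h, ← hdeg]; exact hmon
        rw [this, h]; simp
      · rw [h2 i (by omega), coeff_eq_zero_of_natDegree_lt (p := H) (by omega)]; simp
    · refine .sub (by rw [add_comm]; exact TotalDegreeLE.X.mul h3) ?_
      by_cases hc : r.coeff (k - 1) = 0
      · intro j; simp [hc]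
      -- The leading coefficient of `r` has degree at most `m - (k - 1)`.
      have h4 := h3 (k - 1)
      rw [degree_eq_natDegree hc] at h4
      norm_cast at h4
      have h5 : (r.coeff (k - 1)).degree ≤ ((m + 1 - k : ℕ) : WithBot ℕ) := by
        rw [degree_eq_natDegree hc]
        norm_cast
        omega
      have h6 := (TotalDegreeLE.C h5).mul hH
      rwa [Nat.sub_add_cancel (by omega)] at h6

section

open Polynomial

variable {p : ℕ} [Fact p.Prime]

/-- The nonzero elements of `(A - A) / (A - A)`. -/
def nonzeroQuotients (A : Finset (ZMod p)) : Finset (ZMod p) :=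
  (A.offDiag ×ˢ A.offDiag).image fun q => (q.1.1 - q.1.2) * (q.2.1 - q.2.2)⁻¹

/-- The Rédei polynomial of `A × A`. -/
noncomputable def redei (A : Finset (ZMod p)) : (ZMod p)[X][X] :=
  ∏ q ∈ A ×ˢ A, (X - C (C q.1 - X * C q.2))

lemma redei_map (A : Finset (ZMod p)) (y : ZMod p) :
    (redei A).map (evalRingHom y) = ∏ q ∈ A ×ˢ A, (X - C (q.1 - y * q.2)) := by
  simp [redei, Polynomial.map_prod, mul_comm (C y)]

lemma totalDegreeLE_redei (A : Finset (ZMod p)) : TotalDegreeLE (A ×ˢ A).card (redei A) := by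
  refine .prod _ _ fun q _ => .sub .X (.C ?_)
  refine (degree_sub_le _ _).trans (max_le (degree_C_le.trans (by simp)) ?_)
  rw [mul_comm]
  simpa using degree_C_mul_X_le q.2

lemma redei_map_dvd (A : Finset (ZMod p)) {y : ZMod p} (hy : y ∉ insert 0 (nonzeroQuotients A)) :
    (redei A).map (evalRingHom y) ∣ X ^ p - X := by
  rw [redei_map]
  refine Finset.prod_dvd_of_coprime (fun q hq q' hq' hne => ?_) fun q _ => ?_
  · refine isCoprime_X_sub_C_of_isUnit_sub (isUnit_iff_ne_zero.2 fun h => hy ?_)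
    simp only [Finset.coe_product, Set.mem_prod, Finset.mem_coe] at hq hq'
    have h' : q.1 - q'.1 = y * (q.2 - q'.2) := by linear_combination h
    have h2 : q.2 ≠ q'.2 := by
      intro h2
      rw [h2, sub_self, mul_zero, sub_eq_zero] at h'
      exact hne (Prod.ext h' h2)
    have h3 : y = (q.1 - q'.1) * (q.2 - q'.2)⁻¹ := by
      rw [h', mul_assoc, mul_inv_cancel₀ (sub_ne_zero.2 h2), mul_one]
    by_cases h1 : q.1 = q'.1
    · rw [h1, sub_self, zero_mul] at h3
      exact Finset.mem_insert.2 (.inl h3)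
    · refine Finset.mem_insert.2 (.inr (Finset.mem_image.2 ⟨((q.1, q'.1), (q.2, q'.2)), ?_, h3.symm⟩))
      simp [hq, hq', h1, h2]
  · rw [dvd_iff_isRoot]
    simp [ZMod.pow_card]

/-- A polynomial of degree less than `p` with zero derivative is constant. -/
lemma eq_C_of_derivative_eq_zero {r : (ZMod p)[X]} (hr : ∀ j, p ≤ j → r.coeff j = 0)
    (h : derivative r = 0) : r = C (r.coeff 0) := by
  ext j
  rcases j with _ | j
  · simp
  rw [coeff_C, if_neg (by omega)]
  by_cases hj : p ≤ j + 1
  · exact hr _ hj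
  have h1 : (derivative r).coeff j = 0 := by rw [h]; simp
  rw [coeff_derivative] at h1
  refine (mul_eq_zero.1 h1).resolve_right fun h2 => ?_
  have h3 : ((j + 1 : ℕ) : ZMod p) = 0 := by exact_mod_cast h2
  rw [ZMod.natCast_eq_zero_iff] at h3
  exact hj (Nat.le_of_dvd (by omega) h3)

lemma card_sq_sub_card_le_card_quotients (A : Finset (ZMod p)) (hA : 2 ≤ A.card)
    (hA2 : A.card ^ 2 < p) : A.card ^ 2 - A.card ≤ (nonzeroQuotients A).card := by
  set n := A.card with hn
  set D := insert 0 (nonzeroQuotients A) with hD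
  have hcard : (A ×ˢ A).card = n ^ 2 := by rw [Finset.card_product, sq]
  have hn4 : 4 ≤ n ^ 2 := by nlinarith
  have hmon : (redei A).Monic := monic_prod_of_monic _ _ fun q _ => monic_X_sub_C _
  have hdeg : (redei A).natDegree = n ^ 2 := by
    rw [redei, natDegree_prod_of_monic _ _ fun q _ => monic_X_sub_C _]
    simp only [natDegree_X_sub_C, Finset.sum_const, smul_eq_mul, mul_one, hcard]
  obtain ⟨f, r, h1, h2, h3⟩ := exists_remainder (by omega) hmon hdeg
    (hcard ▸ totalDegreeLE_redei A) p
  have hmap : ∀ y : ZMod p, (X : (ZMod p)[X]) ^ p =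
      (redei A).map (evalRingHom y) * f.map (evalRingHom y) + r.map (evalRingHom y) := by
    intro y
    simpa using congrArg (Polynomial.map (evalRingHom y)) h1
  have hout : ∀ y ∉ D, r.map (evalRingHom y) = X := by
    intro y hy
    have hm := hmap y
    have hdvd : (redei A).map (evalRingHom y) ∣ r.map (evalRingHom y) - X := by
      have : r.map (evalRingHom y) - X =
          (X ^ p - X) - (redei A).map (evalRingHom y) * f.map (evalRingHom y) := by
        rw [hm]; ring
      rw [this]
      exact dvd_sub (redei_map_dvd A hy) (dvd_mul_right _ _)
    refine sub_eq_zero.1 (eq_zero_of_dvd_of_degree_lt hdvd ?_)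
    rw [degree_eq_natDegree (hmon.map _).ne_zero, hmon.natDegree_map, hdeg,
      degree_lt_iff_coeff_zero]
    intro j hj
    rw [coeff_sub, coeff_map, h2 j hj, coeff_X, if_neg (by omega)]
    simp
  have hvanish : ∀ j, D.card < j → r.coeff j = 0 := by
    intro j hj
    have hD1 : 1 ≤ D.card := Finset.card_pos.2 ⟨0, Finset.mem_insert_self _ _⟩
    refine eq_zero_of_degree_lt_of_eval_finset_eq_zero Dᶜ ?_ fun y hy => ?_
    · rw [Finset.card_compl, ZMod.card]
      by_cases hc : r.coeff j = 0
      · simp [hc]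
      have h4 := h3 j
      rw [degree_eq_natDegree hc] at h4 ⊢
      norm_cast at h4 ⊢
      omega
    · have h5 := congrArg (fun q => q.coeff j) (hout y (Finset.mem_compl.1 hy))
      simp only [coeff_map, coe_evalRingHom, coeff_X] at h5
      rw [h5, if_neg (by omega)]
  -- Specialize at `Y = 0`.
  set P : (ZMod p)[X] := ∏ a ∈ A, (X - C a) with hP
  have hPmon : P.Monic := monic_prod_of_monic _ _ fun q _ => monic_X_sub_C _
  have hPdeg : P.natDegree = n := by
    rw [hP, natDegree_prod_of_monic _ _ fun q _ => monic_X_sub_C _]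
    simp [hn]
  have h0 : (redei A).map (evalRingHom 0) = P ^ n := by
    rw [redei_map, Finset.prod_product]
    simp [Finset.prod_pow, hP, hn]
  have hm0 := hmap 0
  rw [h0] at hm0
  set f₀ := f.map (evalRingHom 0)
  set r₀ := r.map (evalRingHom 0) with hr₀
  have hr₀deg : r₀.natDegree ≤ D.card := by
    rw [natDegree_le_iff_coeff_eq_zero]
    intro j hj
    rw [hr₀, coeff_map, hvanish j hj, map_zero]
  have hdvd : P ^ (n - 1) ∣ derivative r₀ := by
    have : derivative r₀ = - derivative (P ^ n * f₀) := by
      have h6 := congrArg derivative hm0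
      rw [derivative_X_pow, CharP.cast_eq_zero, derivative_add] at h6
      simp only [map_zero, zero_mul] at h6
      linear_combination -h6
    rw [this, dvd_neg, derivative_mul, derivative_pow]
    refine dvd_add ?_ ?_
    · exact Dvd.intro_left (C (n : ZMod p) * derivative P * f₀) (by ring)
    · exact (pow_dvd_pow P (Nat.sub_le n 1)).mul_right _
  have hne : derivative r₀ ≠ 0 := by
    intro hzero
    have hconst := eq_C_of_derivative_eq_zero (r := r₀)
      (fun j hj => by rw [hr₀, coeff_map, h2 j (by omega), map_zero]) hzero
    have hall : ∀ a ∈ A, a = r₀.coeff 0 := by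
      intro a ha
      have h7 := congrArg (eval a) hm0
      have h8 : eval a P = 0 := by
        rw [hP, eval_prod]
        exact Finset.prod_eq_zero ha (by simp)
      rw [hconst] at h7
      simpa [h8, ZMod.pow_card, zero_pow (show n ≠ 0 by omega)] using h7
    obtain ⟨a, ha, b, hb, hab⟩ := Finset.one_lt_card.1 (show 1 < A.card by omega)
    exact hab ((hall a ha).trans (hall b hb).symm)
  have h9 := natDegree_le_of_dvd hdvd hne
  rw [hPmon.natDegree_pow, hPdeg] at h9
  have h10 : r₀.natDegree ≠ 0 := by
    intro h
    rw [eq_C_of_natDegree_eq_zero h, derivative_C] at hne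
    exact hne rfl
  have h11 := natDegree_derivative_lt h10
  have h12 : D.card ≤ (nonzeroQuotients A).card + 1 := Finset.card_insert_le _ _
  have h13 : n ^ 2 - n = (n - 1) * n := by rw [Nat.sub_mul, one_mul, sq]
  omega

end

/-- If `|A| ≥ 2` and `|A|² < p`, there is a nonzero `x ∈ (A-A)/(A-A)` having at most
`|A|² - |A|` representations `x = (a-b)/(c-d)` with `(a,b,c,d) ∈ A⁴`, `a ≠ b`, `c ≠ d`. -/
theorem exists_popularity_bounded_quotient (p : ℕ) (hp : p.Prime)
    (A : Finset (ZMod p)) (hA : 2 ≤ A.card) (hA2 : A.card ^ 2 < p) :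
    ∃ x : ZMod p, x ≠ 0 ∧
      (∃ a ∈ A, ∃ b ∈ A, ∃ c ∈ A, ∃ d ∈ A, a ≠ b ∧ c ≠ d ∧ x = (a - b) * (c - d)⁻¹) ∧
      ((A ×ˢ A ×ˢ A ×ˢ A).filter (fun q : ZMod p × ZMod p × ZMod p × ZMod p =>
          q.1 ≠ q.2.1 ∧ q.2.2.1 ≠ q.2.2.2 ∧ q.1 - q.2.1 = x * (q.2.2.1 - q.2.2.2))).card ≤
        A.card ^ 2 - A.card := by
  have : Fact p.Prime := ⟨hp⟩
  have hQ := card_sq_sub_card_le_card_quotients A hA hA2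
  have hoff : A.offDiag.card = A.card ^ 2 - A.card := by rw [Finset.offDiag_card, sq]
  have hpos : 0 < A.card ^ 2 - A.card := Nat.sub_pos_of_lt (by nlinarith)
  obtain ⟨x, hx, hle⟩ := Finset.exists_card_fiber_le_of_card_le_mul
    (s := A.offDiag ×ˢ A.offDiag) (t := nonzeroQuotients A)
    (f := fun q => (q.1.1 - q.1.2) * (q.2.1 - q.2.2)⁻¹) (n := A.card ^ 2 - A.card)
    (Finset.card_pos.1 (by omega))
    (by rw [Finset.card_product, hoff]; exact Nat.mul_le_mul_right _ hQ)
  obtain ⟨⟨⟨a, b⟩, c, d⟩, hq, rfl⟩ := Finset.mem_image.1 hx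
  simp only [Finset.mem_product, Finset.mem_offDiag] at hq
  obtain ⟨⟨ha, hb, hab⟩, hc, hd, hcd⟩ := hq
  refine ⟨_, mul_ne_zero (sub_ne_zero.2 hab) (inv_ne_zero (sub_ne_zero.2 hcd)),
    ⟨a, ha, b, hb, c, hc, d, hd, hab, hcd, rfl⟩, le_trans ?_ hle⟩
  refine Finset.card_le_card_of_injOn (fun q => ((q.1, q.2.1), (q.2.2.1, q.2.2.2))) ?_ ?_
  · rintro ⟨a', b', c', d'⟩ h
    simp only [Finset.coe_filter, Finset.mem_product, Set.mem_ofPred_eq] at h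
    obtain ⟨⟨ha', hb', hc', hd'⟩, h1, h2, h3⟩ := h
    simp only [Finset.coe_filter, Finset.mem_product, Finset.mem_offDiag, Set.mem_ofPred_eq]
    refine ⟨⟨⟨ha', hb', h1⟩, hc', hd', h2⟩, ?_⟩
    rw [h3, mul_assoc, mul_inv_cancel₀ (sub_ne_zero.2 h2), mul_one]
  · rintro ⟨a', b', c', d'⟩ - ⟨a'', b'', c'', d''⟩ - h
    simpa [and_assoc] using h
end
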